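/- (i) There is a unique family (m_g), indexed by the good words g, of homogeneous elements of 𝒰 with |m_g| = |g|, such that for all good words g, h of the same degree the coefficient of the word g in m_h equals 1 if g = h and 0 otherwise; moreover (m_g)_{g good} is a ℚ(q)-basis of 𝒰. (ii) The family (Ξ(g))_{g good} is a ℚ(q)-basis of 𝒰. -/

import Mathlib

open scoped BigOperators

noncomputable section

/-- The field `ℚ(q)` of rational functions over `ℚ`. -/
abbrev K : Type := RatFunc ℚ

/-- The indeterminate `q`. -/
abbrev qq : K := RatFunc.X

/-- Words on the alphabet `{w_1, …, w_r}` (the free monoid `M`). -/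
abbrev Word (r : ℕ) := List (Fin r)

/-- The space `F` with basis the words, as finitely supported families of coefficients. -/
abbrev FA (r : ℕ) := Word r →₀ K

variable {r : ℕ}

/-- `(|w|, |x|)` : the symmetric bilinear form evaluated on the degrees of two words,
where `p i j = (α_i, α_j)` is the form on simple roots. -/
def pairW (p : Fin r → Fin r → ℤ) (w x : Word r) : ℤ :=
  (w.map fun i => (x.map fun j => p i j).sum).sum

/-- Auxiliary q-shuffle on *reversed* words:
`shAux p w x` is the q-shuffle of `w.reverse` and `x.reverse`; it implements the recursion
`(w·a) * (x·b) = (w * (x·b))·a + q^{-(|w·a|,|b|)} ((w·a) * x)·b`, `w[] * x = x * w[] = x`. -/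
def shAux (p : Fin r → Fin r → ℤ) : Word r → Word r → FA r
  | [], x => Finsupp.single x.reverse 1
  | w, [] => Finsupp.single w.reverse 1
  | a :: w, b :: x =>
      Finsupp.mapDomain (fun u => u ++ [a]) (shAux p w (b :: x))
      + (qq ^ (-(pairW p (a :: w) [b]))) •
          Finsupp.mapDomain (fun u => u ++ [b]) (shAux p (a :: w) x)
  termination_by w x => w.length + x.length
  decreasing_by all_goals (first | (simp only [List.length_cons]; omega) | omega)

/-- The q-shuffle product `*` on `F`, extended bilinearly from words. -/
def shuffle (p : Fin r → Fin r → ℤ) (f g : FA r) : FA r :=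
  f.sum fun w c => g.sum fun x d => (c * d) • shAux p w.reverse x.reverse

/-- Membership in `𝒰`, the `ℚ(q)`-subalgebra of `(F, *)` generated by the letters `w_i`. -/
inductive InU (p : Fin r → Fin r → ℤ) : FA r → Prop
  | letter (i : Fin r) : InU p (Finsupp.single [i] 1)
  | one : InU p (Finsupp.single ([] : Word r) 1)
  | add : ∀ {f g : FA r}, InU p f → InU p g → InU p (f + g)
  | smul : ∀ (c : K) {f : FA r}, InU p f → InU p (c • f)
  | mul : ∀ {f g : FA r}, InU p f → InU p g → InU p (shuffle p f g)

/-- The degree of a word in `Q⁺`, recorded as the multiplicity of each simple root. -/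
def deg (w : Word r) : Fin r → ℕ := fun i => w.count i

/-- `f` is homogeneous of degree `ν`. -/
def Homog (f : FA r) (ν : Fin r → ℕ) : Prop := ∀ w ∈ f.support, deg w = ν

/-- Lexicographic order on words (a proper left factor is smaller than the word). -/
def wlt (w x : Word r) : Prop := List.Lex (· < ·) w x

def wle (w x : Word r) : Prop := wlt w x ∨ w = x

/-- `g` is the lexicographically largest word occurring (with nonzero coefficient) in `f`. -/
def IsMaxWord (f : FA r) (g : Word r) : Prop :=
  f g ≠ 0 ∧ ∀ w ∈ f.support, wle w g

/-- Good words: words of the form `max(u)` for a nonzero homogeneous `u ∈ 𝒰`. -/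
def IsGood (p : Fin r → Fin r → ℤ) (g : Word r) : Prop :=
  ∃ u : FA r, InU p u ∧ (∃ ν, Homog u ν) ∧ IsMaxWord u g

/-- `Ξ` on a word: the q-shuffle product of its letters. -/
def xiWord (p : Fin r → Fin r → ℤ) : Word r → FA r
  | [] => Finsupp.single ([] : Word r) 1
  | i :: w => shuffle p (Finsupp.single [i] 1) (xiWord p w)

/-- The data of the Cartan matrix `[a_{ij}]` of a finite-dimensional complex simple
Lie algebra of rank `r`: an integral matrix with `2` on the diagonal and nonpositive
off-diagonal entries, symmetrizable by `d_i ∈ {1,2,3}`, whose symmetrization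
`(α_i, α_j) = d_i a_{ij}` is positive definite, and which is indecomposable. -/
structure CartanData (r : ℕ) where
  a : Fin r → Fin r → ℤ
  d : Fin r → ℤ
  diag : ∀ i, a i i = 2
  offdiag : ∀ i j, i ≠ j → a i j ≤ 0
  dval : ∀ i, d i = 1 ∨ d i = 2 ∨ d i = 3
  dsymm : ∀ i j, d i * a i j = d j * a j i
  posdef : ∀ v : Fin r → ℚ, v ≠ 0 → 0 < ∑ i, ∑ j, v i * v j * ((d i * a i j : ℤ) : ℚ)
  indec : ∀ s : Finset (Fin r), s.Nonempty → s ≠ Finset.univ →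
    ∃ i ∈ s, ∃ j, j ∉ s ∧ a i j ≠ 0

/-- The symmetric bilinear form `(α_i, α_j) = d_i a_{ij}` on simple roots. -/
def CartanData.p (C : CartanData r) : Fin r → Fin r → ℤ := fun i j => C.d i * C.a i j

/-!
Deleting the last letter is a skew derivation of the q-shuffle product; comparing last letters,
this yields associativity, so that `Ξ(v) * Ξ(w) = Ξ(v·w)` and `𝒰` is spanned by the elements `Ξ(w)`.
Deleting the last letter of `Ξ(v)` amounts to deleting, with powers of `q`, one letter of `v`, and
multiplying by a letter on the right is dual to the same operation; hence the matrix `Ξ(v)(w)`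
is symmetric. Good words are the pivots of `𝒰` in the lexicographic order, finitely many in each
degree, so Gaussian elimination produces the reduced echelon basis `(m_g)`. Expanding each `Ξ(v)`
in this basis and using symmetry gives `Ξ(w) = ∑_g m_g(w) Ξ(g)`, and the functionals that take the
values `m_g(w)` on `Ξ(w)` show that the `Ξ(g)` are linearly independent.
-/

section DualFamily

variable {ι κ k : Type*}

/-- A family `m` in the space `V` of finitely supported functions that is dual to the coefficient
functionals at the points `e b`: the coefficient of `m a` at `e b` is `1` if `a = b`, else `0`. -/
structure IsDualFamily [Semiring k] (V : Submodule k (ι →₀ k)) (e : κ → ι) (m : κ → ι →₀ k) :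
    Prop where
  mem : ∀ a, m a ∈ V
  apply : ∀ a b, m a (e b) = Finsupp.single a 1 b

namespace IsDualFamily

section CommRing

variable [CommRing k] {V : Submodule k (ι →₀ k)} {e : κ → ι} {m m' : κ → ι →₀ k}

theorem linearIndependent (hm : IsDualFamily V e m) : LinearIndependent k m :=
  .of_pairwise_dual_eq_zero_one m (fun b => Finsupp.lapply (e b))
    (fun b a hba => by simp [hm.apply, hba]) (fun b => by simp [hm.apply])

theorem injective [Nontrivial k] (hm : IsDualFamily V e m) : Function.Injective e := by
  intro a b hab
  by_contra hne
  have hab' : m a (e a) = m a (e b) := by rw [hab]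
  simp [hm.apply, Ne.symm hne] at hab'

theorem unique (hV : ∀ f ∈ V, (∀ b, f (e b) = 0) → f = 0) (hm : IsDualFamily V e m)
    (hm' : IsDualFamily V e m') : m = m' :=
  funext fun a => sub_eq_zero.1 <| hV _ (sub_mem (hm.mem a) (hm'.mem a)) fun b => by
    simp [hm.apply, hm'.apply]

theorem linearCombination_apply (hm : IsDualFamily V e m) (c : κ →₀ k) (b : κ) :
    Finsupp.linearCombination k m c (e b) = c b := by
  classical
  simp only [Finsupp.linearCombination_apply, Finsupp.sum_apply, Finsupp.smul_apply, hm.apply,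
    Finsupp.single_apply, smul_eq_mul, mul_ite, mul_one, mul_zero, Finsupp.sum_ite_self_eq']

theorem linearCombination_coeff_eq [Nontrivial k] (hV : ∀ f ∈ V, (∀ b, f (e b) = 0) → f = 0)
    (hm : IsDualFamily V e m) {f : ι →₀ k} (hf : f ∈ V) :
    Finsupp.linearCombination k m (f.comapDomain e hm.injective.injOn) = f := by
  have hmem (c : κ →₀ k) : Finsupp.linearCombination k m c ∈ V :=
    Submodule.sum_mem _ fun a _ => V.smul_mem _ (hm.mem a)
  refine sub_eq_zero.1 (hV _ (sub_mem (hmem _) hf) fun b => ?_)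
  rw [Finsupp.sub_apply, hm.linearCombination_apply, Finsupp.comapDomain_apply, sub_self]

theorem span_range_eq [Nontrivial k] (hV : ∀ f ∈ V, (∀ b, f (e b) = 0) → f = 0)
    (hm : IsDualFamily V e m) : Submodule.span k (Set.range m) = V := by
  refine le_antisymm (Submodule.span_le.2 (Set.range_subset_iff.2 hm.mem)) fun f hf => ?_
  rw [← hm.linearCombination_coeff_eq hV hf]
  exact (Finsupp.range_linearCombination k).le ⟨_, rfl⟩

end CommRing

end IsDualFamily

section Symmetric

variable [CommRing k] {e : κ → ι} {m : κ → ι →₀ k} {S : ι → ι →₀ k}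

theorem exists_dual_apply_eq_of_mem_span_range (hS : ∀ v w, S v w = S w v) {f : ι →₀ k}
    (hf : f ∈ Submodule.span k (Set.range S)) :
    ∃ φ : Module.Dual k (ι →₀ k), ∀ v, φ (S v) = f v := by
  obtain ⟨c, rfl⟩ := (Finsupp.mem_span_range_iff_exists_finsupp).1 hf
  refine ⟨c.sum fun w a => a • Finsupp.lapply w, fun v => ?_⟩
  simp [Finsupp.sum, hS v]

/-- The functional `φ a` with `φ a (S v) = m a v` for all `v` separates `S (e a)` from the other
`S (e b)`. -/
theorem IsDualFamily.linearIndependent_comp_of_symm (hS : ∀ v w, S v w = S w v)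
    (hm : IsDualFamily (Submodule.span k (Set.range S)) e m) :
    LinearIndependent k fun a => S (e a) := by
  choose φ hφ using fun a => exists_dual_apply_eq_of_mem_span_range hS (hm.mem a)
  exact .of_pairwise_dual_eq_zero_one _ φ (fun a b hab => by simp [hφ, hm.apply, hab.symm])
    (fun a => by simp [hφ, hm.apply])

theorem IsDualFamily.span_range_comp_eq_of_symm [Nontrivial k] (hS : ∀ v w, S v w = S w v)
    (hV : ∀ f ∈ Submodule.span k (Set.range S), (∀ b, f (e b) = 0) → f = 0)
    (hm : IsDualFamily (Submodule.span k (Set.range S)) e m)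
    (hfin : ∀ w, {a | m a w ≠ 0}.Finite) :
    Submodule.span k (Set.range fun a => S (e a)) = Submodule.span k (Set.range S) := by
  refine le_antisymm (Submodule.span_mono (Set.range_comp_subset_range e S))
    (Submodule.span_le.2 (Set.range_subset_iff.2 fun w => ?_))
  suffices hw : S w = ∑ a ∈ (hfin w).toFinset, m a w • S (e a) from
    hw ▸ Submodule.sum_mem _ fun a _ => Submodule.smul_mem _ _ (Submodule.subset_span ⟨a, rfl⟩)
  ext v
  have hSv : S v ∈ Submodule.span k (Set.range S) := Submodule.subset_span ⟨v, rfl⟩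
  calc
    S w v = Finsupp.linearCombination k m ((S v).comapDomain e hm.injective.injOn) w := by
      rw [hm.linearCombination_coeff_eq hV hSv, hS]
    _ = ∑ᶠ a, S v (e a) * m a w := by
      rw [Finsupp.linearCombination_apply, Finsupp.sum_apply, Finsupp.sum,
        finsum_eq_sum_of_support_subset]
      · rfl
      · intro a ha
        simpa using left_ne_zero_of_mul ha
    _ = (∑ a ∈ (hfin w).toFinset, m a w • S (e a)) v := by
      rw [finsum_eq_sum_of_support_subset (s := (hfin w).toFinset)]
      · simp [Finsupp.finsetSum_apply, hS v, mul_comm]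
      · intro a ha
        simpa using right_ne_zero_of_mul ha

end Symmetric

end DualFamily

section LeadingExponents

variable {ι k : Type*} [LinearOrder ι]

/-- The leading exponents of a space `V` of finitely supported functions: the largest elements of
the supports of the nonzero elements of `V`. -/
def leadingExponents [Semiring k] (V : Submodule k (ι →₀ k)) : Set ι :=
  {g | ∃ u ∈ V, u g ≠ 0 ∧ ∀ w ∈ u.support, w ≤ g}

theorem eq_zero_of_forall_leadingExponents [Semiring k] {V : Submodule k (ι →₀ k)} {f : ι →₀ k}
    (hf : f ∈ V) (h : ∀ g ∈ leadingExponents V, f g = 0) : f = 0 := by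
  by_contra hf0
  have hne : f.support.Nonempty := Finsupp.support_nonempty_iff.2 hf0
  have hmax : f (f.support.max' hne) ≠ 0 := Finsupp.mem_support_iff.1 (f.support.max'_mem hne)
  exact hmax (h _ ⟨f, hf, hmax, f.support.le_max'⟩)

theorem exists_mem_eqOn_single_of_isWF [Field k] {V : Submodule k (ι →₀ k)}
    (hV : (leadingExponents V).IsWF) {g : ι} (hg : g ∈ leadingExponents V) :
    ∃ f ∈ V, Set.EqOn f (Finsupp.single g 1) (leadingExponents V) := by
  classical
  refine Set.WellFoundedOn.induction hV hg
    (P := fun g => ∃ f ∈ V, Set.EqOn f (Finsupp.single g 1) (leadingExponents V))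
    fun g hg ih => ?_
  obtain ⟨u, huV, hug, hmax⟩ := hg
  let s : Finset ι := {h ∈ u.support | h ∈ leadingExponents V ∧ h ≠ g}
  have hs (h : ι) (hh : h ∈ s) : h ∈ leadingExponents V ∧ h < g := by
    obtain ⟨hsupp, hlead, hne⟩ := by simpa only [s, Finset.mem_filter] using hh
    exact ⟨hlead, lt_of_le_of_ne (hmax h hsupp) hne⟩
  choose! m hmV hm using fun h hh => ih h (hs h hh).1 (hs h hh).2
  refine ⟨(u g)⁻¹ • (u - ∑ h ∈ s, u h • m h), V.smul_mem _ (sub_mem huV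
    (V.sum_mem fun h hh => V.smul_mem _ (hmV h hh))), fun b hb => ?_⟩
  have hsum : (∑ h ∈ s, u h • m h) b = if b ∈ s then u b else 0 := by
    rw [Finsupp.finsetSum_apply, ← Finset.sum_ite_eq' s b u]
    refine Finset.sum_congr rfl fun h hh => ?_
    simp [hm h hh hb, Finsupp.single_apply]
  rw [Finsupp.smul_apply, Finsupp.sub_apply, hsum]
  by_cases hbg : b = g
  · subst hbg
    simp [s, hug]
  · by_cases hub : u b = 0 <;> simp [s, hb, hbg, hub]

end LeadingExponents

theorem filter_mem_span {ι k : Type*} [Semiring k] {P : ι → Prop} [DecidablePred P]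
    {s : Set (ι →₀ k)} (hs : ∀ x ∈ s, x.filter P = x ∨ x.filter P = 0) {f : ι →₀ k}
    (hf : f ∈ Submodule.span k s) : f.filter P ∈ Submodule.span k s := by
  induction hf using Submodule.span_induction with
  | mem x hx =>
    rcases hs x hx with h | h <;> rw [h]
    exacts [Submodule.subset_span hx, zero_mem _]
  | zero => simp [Finsupp.filter_zero]
  | add f g _ _ hf hg => rw [Finsupp.filter_add]; exact add_mem hf hg
  | smul c f _ hf => rw [Finsupp.filter_smul]; exact Submodule.smul_mem _ c hf

section Pairing

variable (p : Fin r → Fin r → ℤ)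

theorem pairW_nil_left (x : Word r) : pairW p [] x = 0 := rfl

theorem pairW_cons_left (i : Fin r) (w x : Word r) :
    pairW p (i :: w) x = pairW p [i] x + pairW p w x := by
  simp [pairW]

theorem pairW_append_left (v w x : Word r) : pairW p (v ++ w) x = pairW p v x + pairW p w x := by
  simp [pairW]

theorem pairW_reverse_left (w x : Word r) : pairW p w.reverse x = pairW p w x := by
  simp [pairW, List.sum_reverse]

theorem pairW_singleton (i j : Fin r) : pairW p [i] [j] = p i j := by
  simp [pairW]

end Pairing

section DeleteLast

/-- The operator on `F` that sends `w·c` to `w` and kills the words not ending in `c`; it is a skew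
derivation of the q-shuffle product, see `deleteLast_shuffleBilin`. -/
def deleteLast (c : Fin r) : FA r →ₗ[K] FA r :=
  Finsupp.lcomapDomain (fun u => u ++ [c]) (List.append_left_injective [c])

theorem deleteLast_apply (c : Fin r) (f : FA r) (w : Word r) :
    deleteLast c f w = f (w ++ [c]) := rfl

theorem deleteLast_mapDomain_append (c a : Fin r) (f : FA r) :
    deleteLast c (Finsupp.mapDomain (fun u => u ++ [a]) f) = if a = c then f else 0 := by
  ext w
  rw [deleteLast_apply]
  split_ifs with hac
  · rw [hac]
    exact Finsupp.mapDomain_apply (List.append_left_injective [c]) f w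
  · refine Finsupp.mapDomain_of_notMem_range _ _ fun ⟨u, hu⟩ => hac ?_
    simpa using List.append_inj_right' hu rfl

theorem deleteLast_single_nil (c : Fin r) (k : K) : deleteLast c (Finsupp.single [] k) = 0 := by
  ext w
  simp [deleteLast_apply]

theorem deleteLast_single_append (c a : Fin r) (w : Word r) (k : K) :
    deleteLast c (Finsupp.single (w ++ [a]) k) = if a = c then Finsupp.single w k else 0 := by
  rw [← deleteLast_mapDomain_append, Finsupp.mapDomain_single]

theorem deleteLast_letter (c i : Fin r) :
    deleteLast c (Finsupp.single [i] 1) = if i = c then Finsupp.single [] 1 else 0 :=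
  deleteLast_single_append c i [] 1

end DeleteLast

section Twist

variable (p : Fin r → Fin r → ℤ)

/-- The operator on `F` that multiplies a word `w` by `q^{-(|w|, α_c)}`. -/
def twist (c : Fin r) : FA r →ₗ[K] FA r :=
  Finsupp.linearCombination K fun w => Finsupp.single w (qq ^ (-pairW p w [c]))

theorem twist_single (c : Fin r) (w : Word r) :
    twist p c (Finsupp.single w 1) = qq ^ (-pairW p w [c]) • Finsupp.single w 1 := by
  simp [twist]

theorem twist_apply (c : Fin r) (f : FA r) (w : Word r) :
    twist p c f w = qq ^ (-pairW p w [c]) * f w := by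
  induction f using Finsupp.induction_linear with
  | zero => simp
  | add f g hf hg => simp [hf, hg, mul_add]
  | single x a =>
    rw [← Finsupp.smul_single_one, map_smul, twist_single]
    by_cases hxw : x = w
    · simp [hxw, mul_comm]
    · simp [hxw]

theorem twist_comm (c d : Fin r) (f : FA r) :
    twist p c (twist p d f) = twist p d (twist p c f) := by
  ext w
  simp only [twist_apply, mul_left_comm]

theorem deleteLast_twist (c d : Fin r) (f : FA r) :
    deleteLast c (twist p d f) = qq ^ (-p c d) • twist p d (deleteLast c f) := by
  ext w
  rw [deleteLast_apply, twist_apply, Finsupp.smul_apply, twist_apply, deleteLast_apply,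
    pairW_append_left, pairW_singleton, neg_add_rev, zpow_add₀ RatFunc.X_ne_zero, smul_eq_mul,
    mul_assoc]

end Twist

section Shuffle

variable (p : Fin r → Fin r → ℤ)

/-- The q-shuffle product as a bilinear map. -/
def shuffleBilin : FA r →ₗ[K] FA r →ₗ[K] FA r :=
  Finsupp.linearCombination K fun w =>
    Finsupp.linearCombination K fun x => shAux p w.reverse x.reverse

theorem shuffle_eq_shuffleBilin (f g : FA r) : shuffle p f g = shuffleBilin p f g := by
  simp only [shuffle, shuffleBilin, Finsupp.linearCombination_apply, LinearMap.finsupp_sum_apply,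
    LinearMap.smul_apply, Finsupp.smul_sum, smul_smul]

theorem shuffleBilin_single (w x : Word r) :
    shuffleBilin p (Finsupp.single w 1) (Finsupp.single x 1) = shAux p w.reverse x.reverse := by
  simp [shuffleBilin]

theorem shuffleBilin_append_append (w x : Word r) (a b : Fin r) :
    shuffleBilin p (Finsupp.single (w ++ [a]) 1) (Finsupp.single (x ++ [b]) 1) =
      Finsupp.mapDomain (fun u => u ++ [a])
          (shuffleBilin p (Finsupp.single w 1) (Finsupp.single (x ++ [b]) 1)) +
        qq ^ (-pairW p (w ++ [a]) [b]) • Finsupp.mapDomain (fun u => u ++ [b])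
          (shuffleBilin p (Finsupp.single (w ++ [a]) 1) (Finsupp.single x 1)) := by
  rw [← pairW_reverse_left]
  simp only [shuffleBilin_single, List.reverse_concat, shAux]

theorem nil_shuffleBilin (f : FA r) : shuffleBilin p (Finsupp.single [] 1) f = f := by
  suffices h : shuffleBilin p (Finsupp.single [] 1) = LinearMap.id from
    LinearMap.congr_fun h f
  ext x : 3
  simp [shuffleBilin_single, shAux]

theorem shuffleBilin_nil (f : FA r) : shuffleBilin p f (Finsupp.single [] 1) = f := by
  suffices h : (shuffleBilin p).flip (Finsupp.single [] 1) = LinearMap.id from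
    LinearMap.congr_fun h f
  have hnil (w : Word r) : shAux p w [] = Finsupp.single w.reverse 1 := by cases w <;> simp [shAux]
  ext x : 3
  simp [shuffleBilin_single, hnil]

theorem shuffleBilin_apply_nil (f g : FA r) : shuffleBilin p f g [] = f [] * g [] := by
  suffices h : (shuffleBilin p).compr₂ (Finsupp.lapply []) =
      (LinearMap.mul K K).compl₁₂ (Finsupp.lapply []) (Finsupp.lapply []) from
    LinearMap.congr_fun₂ h f g
  ext w x
  rcases w.eq_nil_or_concat' with rfl | ⟨w, a, rfl⟩
  · simp [nil_shuffleBilin]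
  rcases x.eq_nil_or_concat' with rfl | ⟨x, b, rfl⟩
  · simp [shuffleBilin_nil]
  simp [shuffleBilin_append_append, Finsupp.mapDomain_of_notMem_range]

theorem deleteLast_shuffleBilin (c : Fin r) (f g : FA r) :
    deleteLast c (shuffleBilin p f g) =
      shuffleBilin p (deleteLast c f) g + shuffleBilin p (twist p c f) (deleteLast c g) := by
  suffices h : (shuffleBilin p).compr₂ (deleteLast c) = (shuffleBilin p).comp (deleteLast c) +
      (shuffleBilin p).compl₁₂ (twist p c) (deleteLast c) from LinearMap.congr_fun₂ h f g
  ext w x : 5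
  simp only [LinearMap.compr₂_apply, LinearMap.add_apply, LinearMap.comp_apply,
    LinearMap.compl₁₂_apply, Finsupp.lsingle_apply]
  rcases w.eq_nil_or_concat' with rfl | ⟨w, a, rfl⟩
  · simp [nil_shuffleBilin, deleteLast_single_nil, twist_single, pairW_nil_left]
  rcases x.eq_nil_or_concat' with rfl | ⟨x, b, rfl⟩
  · simp [shuffleBilin_nil, deleteLast_single_nil]
  rw [shuffleBilin_append_append, map_add, map_smul, deleteLast_mapDomain_append,
    deleteLast_mapDomain_append, deleteLast_single_append, deleteLast_single_append, twist_single,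
    map_smul, LinearMap.smul_apply]
  by_cases hac : a = c <;> by_cases hbc : b = c <;> simp [hac, hbc]

theorem twist_shuffleBilin (d : Fin r) (f g : FA r) :
    twist p d (shuffleBilin p f g) = shuffleBilin p (twist p d f) (twist p d g) := by
  ext w
  induction w using List.reverseRecOn generalizing f g with
  | nil => simp [twist_apply, shuffleBilin_apply_nil, pairW_nil_left]
  | append_singleton w c ih =>
    rw [← deleteLast_apply, ← deleteLast_apply]
    simp only [deleteLast_twist, deleteLast_shuffleBilin, map_smul, map_add, LinearMap.smul_apply,
      Finsupp.smul_apply, Finsupp.add_apply, ih, twist_comm p d c, smul_add]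

theorem shuffleBilin_assoc (f g h : FA r) :
    shuffleBilin p (shuffleBilin p f g) h = shuffleBilin p f (shuffleBilin p g h) := by
  ext w
  induction w using List.reverseRecOn generalizing f g h with
  | nil => simp only [shuffleBilin_apply_nil, mul_assoc]
  | append_singleton w c ih =>
    rw [← deleteLast_apply, ← deleteLast_apply]
    simp only [deleteLast_shuffleBilin, twist_shuffleBilin, map_add, LinearMap.add_apply,
      Finsupp.add_apply, ih, add_assoc]

end Shuffle

section Monomials

variable (p : Fin r → Fin r → ℤ)

theorem xiWord_cons (i : Fin r) (w : Word r) :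
    xiWord p (i :: w) = shuffleBilin p (Finsupp.single [i] 1) (xiWord p w) := by
  rw [xiWord, shuffle_eq_shuffleBilin]

theorem xiWord_singleton (i : Fin r) : xiWord p [i] = Finsupp.single [i] 1 := by
  rw [xiWord_cons, xiWord, shuffleBilin_nil]

theorem xiWord_append (v w : Word r) :
    xiWord p (v ++ w) = shuffleBilin p (xiWord p v) (xiWord p w) := by
  induction v with
  | nil => rw [List.nil_append, xiWord, nil_shuffleBilin]
  | cons i v ih => rw [List.cons_append, xiWord_cons, xiWord_cons, ih, shuffleBilin_assoc]

/-- The skew derivation of the concatenation algebra that deletes one letter `c` in all possible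
ways: it sends `v` to the sum of `q^{-(|x|, α_c)} x·y` over the factorizations `v = x·c·y`. -/
def skewDer (c : Fin r) : Word r → FA r
  | [] => 0
  | i :: v => (if i = c then Finsupp.single v 1 else 0) +
      qq ^ (-p i c) • Finsupp.mapDomain (List.cons i) (skewDer c v)

theorem skewDer_append_singleton (c a : Fin r) (v : Word r) :
    skewDer p c (v ++ [a]) = Finsupp.mapDomain (fun u => u ++ [a]) (skewDer p c v) +
      if a = c then qq ^ (-pairW p v [c]) • Finsupp.single v 1 else 0 := by
  induction v with
  | nil => simp [skewDer, pairW_nil_left]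
  | cons i v ih =>
    have hcomm (f : FA r) : Finsupp.mapDomain (List.cons i) (Finsupp.mapDomain (· ++ [a]) f) =
        Finsupp.mapDomain (· ++ [a]) (Finsupp.mapDomain (List.cons i) f) := by
      simp only [← Finsupp.mapDomain_comp]
      rfl
    rw [List.cons_append, skewDer, skewDer, ih, pairW_cons_left, pairW_singleton, neg_add,
      zpow_add₀ RatFunc.X_ne_zero]
    split_ifs <;>
      simp [Finsupp.mapDomain_add, Finsupp.mapDomain_smul, hcomm, mul_smul, add_assoc]

theorem perm_cons_of_mem_support_skewDer {c : Fin r} {u v : Word r}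
    (hu : u ∈ (skewDer p c v).support) : v.Perm (c :: u) := by
  classical
  induction v generalizing u with
  | nil => simp [skewDer] at hu
  | cons i v ih =>
    rcases Finset.mem_union.1 (Finsupp.support_add hu) with hu | hu
    · split_ifs at hu with hic
      · obtain rfl := Finset.mem_singleton.1 (Finsupp.support_single_subset hu)
        rw [hic]
      · simp at hu
    · obtain ⟨u', hu', rfl⟩ := Finset.mem_image.1
        (Finsupp.mapDomain_support (Finsupp.support_smul hu))
      exact ((ih hu').cons i).trans (List.Perm.swap c i u')

theorem deleteLast_xiWord (c : Fin r) (v : Word r) :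
    deleteLast c (xiWord p v) = Finsupp.linearCombination K (xiWord p) (skewDer p c v) := by
  induction v with
  | nil => rw [xiWord, deleteLast_single_nil, skewDer, map_zero]
  | cons i v ih =>
    have hcons (f : FA r) : Finsupp.linearCombination K (xiWord p) (f.mapDomain (List.cons i)) =
        shuffleBilin p (Finsupp.single [i] 1) (Finsupp.linearCombination K (xiWord p) f) := by
      rw [Finsupp.linearCombination_mapDomain, Finsupp.apply_linearCombination]
      congr 2
      exact funext fun w => xiWord_cons p i w
    rw [xiWord_cons, deleteLast_shuffleBilin, deleteLast_letter, twist_single, pairW_singleton, ih,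
      skewDer, map_add, map_smul, map_smul, hcons, LinearMap.smul_apply]
    split_ifs <;> simp [nil_shuffleBilin]

theorem shuffleBilin_letter_apply (c : Fin r) (f : FA r) (v : Word r) :
    shuffleBilin p f (Finsupp.single [c] 1) v =
      Finsupp.linearCombination K f (skewDer p c v) := by
  induction v using List.reverseRecOn generalizing f with
  | nil => simp [shuffleBilin_apply_nil, skewDer]
  | append_singleton v a ih =>
    rw [← deleteLast_apply, deleteLast_shuffleBilin, Finsupp.add_apply, ih, deleteLast_letter,
      skewDer_append_singleton, map_add, Finsupp.linearCombination_mapDomain]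
    congr 1
    by_cases hca : c = a
    · simp [hca, shuffleBilin_nil, twist_apply]
    · simp [hca, Ne.symm hca]

theorem xiWord_apply_append_singleton (c : Fin r) (v w : Word r) :
    xiWord p v (w ++ [c]) =
      Finsupp.linearCombination K (fun u => xiWord p u w) (skewDer p c v) := by
  rw [← deleteLast_apply, deleteLast_xiWord, ← Finsupp.lapply_apply (R := K),
    Finsupp.apply_linearCombination]
  rfl

theorem xiWord_apply_comm (v w : Word r) : xiWord p v w = xiWord p w v := by
  induction w using List.reverseRecOn generalizing v with
  | nil => cases v with
    | nil => rfl
    | cons i v =>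
      rw [xiWord_cons, shuffleBilin_apply_nil, xiWord]
      simp
  | append_singleton w c ih =>
    rw [xiWord_apply_append_singleton, xiWord_append, xiWord_singleton, shuffleBilin_letter_apply]
    simp only [ih]

theorem perm_of_mem_support_xiWord {v w : Word r} (hw : w ∈ (xiWord p v).support) : v.Perm w := by
  rw [Finsupp.mem_support_iff] at hw
  induction w using List.reverseRecOn generalizing v with
  | nil =>
    rw [xiWord_apply_comm, xiWord, Finsupp.single_apply_ne_zero] at hw
    rw [hw.1]
  | append_singleton w c ih =>
    rw [xiWord_apply_append_singleton, Finsupp.linearCombination_apply] at hw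
    obtain ⟨u, hu, hwu⟩ := Finset.exists_ne_zero_of_sum_ne_zero hw
    calc
      v.Perm (c :: u) := perm_cons_of_mem_support_skewDer p hu
      _ |>.Perm (c :: w) := (ih (right_ne_zero_of_mul hwu)).cons c
      _ |>.Perm (w ++ [c]) := (List.perm_append_singleton c w).symm

end Monomials

section Degree

theorem deg_eq_iff_perm {v w : Word r} : deg v = deg w ↔ v.Perm w :=
  funext_iff.trans List.perm_iff_count.symm

theorem finite_setOf_deg_eq (ν : Fin r → ℕ) : {w : Word r | deg w = ν}.Finite := by
  rcases Set.eq_empty_or_nonempty {w : Word r | deg w = ν} with hν | ⟨v, rfl⟩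
  · exact hν ▸ Set.finite_empty
  · exact (List.finite_length_eq (Fin r) v.length).subset fun w hw =>
      (deg_eq_iff_perm.1 hw).length_eq

theorem homog_xiWord (p : Fin r → Fin r → ℤ) (v : Word r) : Homog (xiWord p v) (deg v) :=
  fun _ hw => (deg_eq_iff_perm.2 (perm_of_mem_support_xiWord p hw)).symm

theorem filter_deg_xiWord (p : Fin r → Fin r → ℤ) (v : Word r) (ν : Fin r → ℕ) :
    (xiWord p v).filter (deg · = ν) = xiWord p v ∨ (xiWord p v).filter (deg · = ν) = 0 := by
  by_cases hv : deg v = ν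
  · exact .inl <| (Finsupp.filter_eq_self_iff _ _).2 fun w hw =>
      (homog_xiWord p v w (Finsupp.mem_support_iff.2 hw)).trans hv
  · refine .inr <| (Finsupp.filter_eq_zero_iff _ _).2 fun w hw => ?_
    by_contra hne
    exact hv ((homog_xiWord p v w (Finsupp.mem_support_iff.2 hne)).symm.trans hw)

end Degree

section MonomialSpan

variable {p : Fin r → Fin r → ℤ}

variable (p) in
/-- The algebra `𝒰` as a subspace of `F`, presented as the span of the products `Ξ(w)` of letters;
see `inU_iff_mem_monomialSpan`. -/
def monomialSpan : Submodule K (FA r) := Submodule.span K (Set.range (xiWord p))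

theorem shuffle_mem_monomialSpan {f g : FA r} (hf : f ∈ monomialSpan p) (hg : g ∈ monomialSpan p) :
    shuffle p f g ∈ monomialSpan p := by
  have hmul : Submodule.map₂ (shuffleBilin p) (monomialSpan p) (monomialSpan p) ≤
      monomialSpan p := by
    rw [monomialSpan, Submodule.map₂_span_span, Submodule.span_le]
    rintro _ ⟨_, ⟨v, rfl⟩, _, ⟨w, rfl⟩, rfl⟩
    exact Submodule.subset_span ⟨v ++ w, xiWord_append p v w⟩
  rw [shuffle_eq_shuffleBilin]
  exact hmul (Submodule.apply_mem_map₂ _ hf hg)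

theorem inU_xiWord (w : Word r) : InU p (xiWord p w) := by
  induction w with
  | nil => exact .one
  | cons i w ih => exact .mul (.letter i) ih

theorem inU_iff_mem_monomialSpan {f : FA r} : InU p f ↔ f ∈ monomialSpan p := by
  constructor
  · intro hf
    induction hf with
    | letter i => exact Submodule.subset_span ⟨[i], xiWord_singleton p i⟩
    | one => exact Submodule.subset_span ⟨[], rfl⟩
    | add _ _ hf hg => exact add_mem hf hg
    | smul c _ hf => exact Submodule.smul_mem _ c hf
    | mul _ _ hf hg => exact shuffle_mem_monomialSpan hf hg
  · intro hf
    induction hf using Submodule.span_induction with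
    | mem _ hx =>
      obtain ⟨w, rfl⟩ := hx
      exact inU_xiWord w
    | zero => exact zero_smul K (Finsupp.single [] 1 : FA r) ▸ InU.one.smul 0
    | add _ _ _ _ hf hg => exact hf.add hg
    | smul c _ _ hf => exact hf.smul c

end MonomialSpan

section GoodWords

variable {p : Fin r → Fin r → ℤ}

theorem wle_iff_le {v w : Word r} : wle v w ↔ v ≤ w := by
  rw [le_iff_lt_or_eq]
  rfl

variable (p) in
/-- The homogeneous component of degree `ν` of the algebra `𝒰`. -/
def homogeneousPart (ν : Fin r → ℕ) : Submodule K (FA r) :=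
  monomialSpan p ⊓ Finsupp.supported K K {w | deg w = ν}

theorem mem_homogeneousPart {f : FA r} {ν : Fin r → ℕ} :
    f ∈ homogeneousPart p ν ↔ InU p f ∧ Homog f ν :=
  and_congr inU_iff_mem_monomialSpan.symm (Finsupp.mem_supported K f)

theorem mem_leadingExponents_homogeneousPart {g : Word r} {ν : Fin r → ℕ} :
    g ∈ leadingExponents (homogeneousPart p ν) ↔ IsGood p g ∧ deg g = ν := by
  constructor
  · rintro ⟨u, hu, hug, hmax⟩
    obtain ⟨huU, huν⟩ := mem_homogeneousPart.1 hu
    exact ⟨⟨u, huU, ⟨ν, huν⟩, hug, fun w hw => wle_iff_le.2 (hmax w hw)⟩,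
      huν g (Finsupp.mem_support_iff.2 hug)⟩
  · rintro ⟨⟨u, huU, ⟨ν', huν'⟩, hug, hmax⟩, rfl⟩
    obtain rfl : deg g = ν' := huν' g (Finsupp.mem_support_iff.2 hug)
    exact ⟨u, mem_homogeneousPart.2 ⟨huU, huν'⟩, hug, fun w hw => wle_iff_le.1 (hmax w hw)⟩

theorem isGood_of_mem_leadingExponents {g : Word r} (hg : g ∈ leadingExponents (monomialSpan p)) :
    IsGood p g := by
  obtain ⟨u, hu, hug, hmax⟩ := hg
  have hfilter : u.filter (deg · = deg g) ∈ monomialSpan p :=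
    filter_mem_span (Set.forall_mem_range.2 fun v => filter_deg_xiWord p v _) hu
  refine ⟨u.filter (deg · = deg g), inU_iff_mem_monomialSpan.2 hfilter, ⟨deg g, fun w hw => ?_⟩,
    ?_, fun w hw => wle_iff_le.2 (hmax w ?_)⟩
  · exact (Finset.mem_filter.1 hw).2
  · rwa [Finsupp.filter_apply_pos (deg · = deg g) u rfl]
  · exact (Finset.mem_filter.1 hw).1

theorem eq_zero_of_forall_isGood {f : FA r} (hf : f ∈ monomialSpan p)
    (h : ∀ g : {g : Word r // IsGood p g}, f g = 0) : f = 0 :=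
  eq_zero_of_forall_leadingExponents hf fun g hg => h ⟨g, isGood_of_mem_leadingExponents hg⟩

theorem exists_homog_apply_eq_single {g : Word r} (hg : IsGood p g) :
    ∃ f, InU p f ∧ Homog f (deg g) ∧
      ∀ h, IsGood p h → deg h = deg g → f h = Finsupp.single g 1 h := by
  have hfin : (leadingExponents (homogeneousPart p (deg g))).Finite :=
    (finite_setOf_deg_eq (deg g)).subset fun h hh => (mem_leadingExponents_homogeneousPart.1 hh).2
  obtain ⟨f, hf, hfg⟩ := exists_mem_eqOn_single_of_isWF hfin.isWF
    (mem_leadingExponents_homogeneousPart.2 ⟨hg, rfl⟩)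
  obtain ⟨hfU, hfdeg⟩ := mem_homogeneousPart.1 hf
  exact ⟨f, hfU, hfdeg, fun h hh hdeg =>
    hfg (mem_leadingExponents_homogeneousPart.2 ⟨hh, hdeg⟩)⟩

end GoodWords

section MonomialFamily

variable {p : Fin r → Fin r → ℤ} {m : {g : Word r // IsGood p g} → FA r}

variable (p) in
/-- The characterization of the family `(m_g)` indexed by the good words: `m_g ∈ 𝒰` is homogeneous
of degree `|g|`, and among the good words of that degree only `g` occurs in it, with
coefficient `1`. -/
def IsMonomialFamily (m : {g : Word r // IsGood p g} → FA r) : Prop :=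
  ∀ g : {g : Word r // IsGood p g},
    InU p (m g) ∧ Homog (m g) (deg g.1) ∧
    ∀ h : {g : Word r // IsGood p g}, deg h.1 = deg g.1 → (m g) h.1 = if h = g then 1 else 0

theorem exists_isMonomialFamily (p : Fin r → Fin r → ℤ) : ∃ m, IsMonomialFamily p m := by
  choose m hmU hmdeg hm using fun g : {g : Word r // IsGood p g} =>
    exists_homog_apply_eq_single g.2
  refine ⟨m, fun g => ⟨hmU g, hmdeg g, fun h hdeg => ?_⟩⟩
  simp only [hm g h h.2 hdeg, Finsupp.single_apply, Subtype.ext_iff, eq_comm]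

namespace IsMonomialFamily

theorem deg_eq_of_apply_ne_zero (hm : IsMonomialFamily p m) {g : {g : Word r // IsGood p g}}
    {w : Word r} (hw : m g w ≠ 0) : deg w = deg g.1 :=
  (hm g).2.1 w (Finsupp.mem_support_iff.2 hw)

theorem isDualFamily (hm : IsMonomialFamily p m) :
    IsDualFamily (monomialSpan p) Subtype.val m where
  mem g := inU_iff_mem_monomialSpan.1 (hm g).1
  apply g h := by
    by_cases hdeg : deg h.1 = deg g.1
    · simp only [(hm g).2.2 h hdeg, Finsupp.single_apply, eq_comm]
    · have hne : g ≠ h := fun hgh => hdeg (hgh ▸ rfl)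
      rw [Finsupp.single_eq_of_ne' hne]
      exact not_not.1 (mt hm.deg_eq_of_apply_ne_zero hdeg)

theorem finite_setOf_apply_ne_zero (hm : IsMonomialFamily p m) (w : Word r) :
    {g | m g w ≠ 0}.Finite :=
  ((finite_setOf_deg_eq (deg w)).preimage Subtype.val_injective.injOn).subset
    fun _ hg => (hm.deg_eq_of_apply_ne_zero hg).symm

end IsMonomialFamily

end MonomialFamily

theorem monomial_basis_and_good_word_basis_general {r : ℕ} (p : Fin r → Fin r → ℤ) :
    (∃! m, IsMonomialFamily p m) ∧
    (∀ m, IsMonomialFamily p m → LinearIndependent K m ∧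
      ∀ f : FA r, InU p f ↔ f ∈ Submodule.span K (Set.range m)) ∧
    (LinearIndependent K (fun g : {g : Word r // IsGood p g} => xiWord p g.1) ∧
      ∀ f : FA r, InU p f ↔ f ∈ Submodule.span K
        (Set.range fun g : {g : Word r // IsGood p g} => xiWord p g.1)) := by
  have hsep : ∀ f ∈ monomialSpan p, (∀ g : {g : Word r // IsGood p g}, f g = 0) → f = 0 :=
    fun _ => eq_zero_of_forall_isGood
  have hsymm := xiWord_apply_comm p
  obtain ⟨m, hm⟩ := exists_isMonomialFamily p
  have hdual := hm.isDualFamily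
  refine ⟨⟨m, hm, fun m' hm' => hm'.isDualFamily.unique hsep hdual⟩, fun m' hm' => ?_, ?_, ?_⟩
  · refine ⟨hm'.isDualFamily.linearIndependent, fun f => ?_⟩
    rw [inU_iff_mem_monomialSpan, hm'.isDualFamily.span_range_eq hsep]
  · exact hdual.linearIndependent_comp_of_symm hsymm
  · intro f
    rw [inU_iff_mem_monomialSpan,
      hdual.span_range_comp_eq_of_symm hsymm hsep hm.finite_setOf_apply_ne_zero, monomialSpan]

/-- Proposition 3.3: (i) there is a unique family `(m_g)` of homogeneous elements of `𝒰`,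
indexed by the good words, such that the coefficient of the word `g` in `m_h` is
`δ_{g,h}` for good words `g, h` of the same degree; any such family is a `ℚ(q)`-basis
of `𝒰`. (ii) The family `(Ξ(g))_{g good}` is a `ℚ(q)`-basis of `𝒰`. -/
theorem monomial_basis_and_good_word_basis {r : ℕ} (hr : 1 ≤ r) (C : CartanData r) :
    (∃! m : {g : Word r // IsGood C.p g} → FA r,
      ∀ g : {g : Word r // IsGood C.p g},
        InU C.p (m g) ∧ Homog (m g) (deg g.1) ∧
        ∀ h : {g : Word r // IsGood C.p g}, deg h.1 = deg g.1 →
          (m g) h.1 = if h = g then 1 else 0) ∧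
    (∀ m : {g : Word r // IsGood C.p g} → FA r,
      (∀ g : {g : Word r // IsGood C.p g},
        InU C.p (m g) ∧ Homog (m g) (deg g.1) ∧
        ∀ h : {g : Word r // IsGood C.p g}, deg h.1 = deg g.1 →
          (m g) h.1 = if h = g then 1 else 0) →
      LinearIndependent K m ∧
      ∀ f : FA r, InU C.p f ↔ f ∈ Submodule.span K (Set.range m)) ∧
    (LinearIndependent K (fun g : {g : Word r // IsGood C.p g} => xiWord C.p g.1) ∧
      ∀ f : FA r, InU C.p f ↔
        f ∈ Submodule.span K
          (Set.range fun g : {g : Word r // IsGood C.p g} => xiWord C.p g.1)) :=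
  monomial_basis_and_good_word_basis_general C.p
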